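/- If a graph G contains a loop, then all graph cohomology groups of G vanish: H^i(G) = 0 for all i. -/

import Mathlib

/-- A finite multigraph (possibly with loops and multiple edges), with
vertex type `V` and edges indexed by `Fin n`, edge `e` having endpoints `ends e`. -/
structure OGraph where
  V : Type
  [finV : Fintype V]
  n : ℕ
  ends : Fin n → Sym2 V

attribute [instance] OGraph.finV

namespace OGraph

variable (G : OGraph)

/-- Two vertices are related if some edge in `s` joins them. -/
def rel (s : Finset (Fin G.n)) (u v : G.V) : Prop := ∃ e ∈ s, G.ends e = s(u, v)

/-- The set of connected components of the spanning subgraph `[G:s]`. -/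
def Comp (s : Finset (Fin G.n)) : Type := Quot (G.rel s)

/-- `k(s)`: the number of connected components of the spanning subgraph `[G:s]`. -/
noncomputable def ncomp (s : Finset (Fin G.n)) : ℕ := Nat.card (G.Comp s)

/-- The number of proper colorings of `G` with `m` colors: the value `P_G(m)` of
the chromatic polynomial at the natural number `m`. -/
noncomputable def chromatic (m : ℕ) : ℕ :=
  Nat.card {c : G.V → Fin m // ∀ e u v, G.ends e = s(u, v) → c u ≠ c v}

end OGraph

namespace OGraph

/-- The map on quotients induced by an implication of relations. -/
def qmap {V : Type} {r r' : V → V → Prop} (h : ∀ u v, r u v → r' u v) :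
    Quot r → Quot r' :=
  Quot.lift (Quot.mk r') fun u v huv => Quot.sound (h u v huv)

variable (G : OGraph)

/-- An enhanced state: a subset `s` of the edges together with an assignment of a
color (`1` or `x`; a component is "colored `x`" when the predicate holds) to each
connected component of the spanning subgraph `[G:s]`. -/
abbrev EState := Σ s : Finset (Fin G.n), (G.Comp s → Prop)

/-- `j(S)`: the number of components colored `x` in the enhanced state `S`. -/
noncomputable def jdeg (S : G.EState) : ℕ := Nat.card {k : G.Comp S.1 // S.2 k}

open Classical in
/-- The enhanced state(s) obtained from `S` by adding the edge `e`: zero if `e`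
already belongs to `S` or if the added edge merges two components both colored `x`
(the product `x∗x = 0`); otherwise the enhanced state on `insert e s` whose
coloring is obtained from that of `S` using the product
`1∗1 = 1`, `1∗x = x∗1 = x`. -/
noncomputable def addEdge (S : G.EState) (e : Fin G.n) : G.EState →₀ ℤ :=
  if e ∈ S.1 then 0
  else
    let p : G.Comp S.1 → G.Comp (insert e S.1) :=
      qmap fun _ _ huv => huv.elim fun f hf => ⟨f, Finset.mem_insert_of_mem hf.1, hf.2⟩
    if ∃ k1 k2 : G.Comp S.1, k1 ≠ k2 ∧ p k1 = p k2 ∧ S.2 k1 ∧ S.2 k2 then 0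
    else Finsupp.single ⟨insert e S.1, fun K => ∃ k, p k = K ∧ S.2 k⟩ 1

/-- The differential applied to a single enhanced state: the signed sum, over all
edges `e` not in `S`, of the states obtained by adding `e`; the sign is `(-1)^{n(e)}`
where `n(e)` is the number of edges of `S` ordered before `e`. -/
noncomputable def dState (S : G.EState) : G.EState →₀ ℤ :=
  ∑ e : Fin G.n, ((-1 : ℤ) ^ (S.1.filter fun f => f < e).card) • G.addEdge S e

/-- The differential of the graph cohomology complex, as a linear endomorphism of
the free `ℤ`-module generated by all enhanced states. -/
noncomputable def diff : (G.EState →₀ ℤ) →ₗ[ℤ] (G.EState →₀ ℤ) :=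
  Finsupp.lsum ℤ fun S => LinearMap.toSpanSingleton ℤ _ (G.dState S)

/-- The chain group `C^{i,j}(G)`: the free `ℤ`-module spanned by the enhanced
states with `i` edges and `j` components colored `x`, as a submodule of the free
module on all enhanced states. -/
noncomputable def Cmod (i j : ℕ) : Submodule ℤ (G.EState →₀ ℤ) :=
  Finsupp.supported ℤ ℤ {S : G.EState | S.1.card = i ∧ G.jdeg S = j}

/-- The cocycles of bidegree `(i,j)`. -/
noncomputable def Zmod (i j : ℕ) : Submodule ℤ (G.EState →₀ ℤ) :=
  LinearMap.ker G.diff ⊓ G.Cmod i j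

/-- The coboundaries: `0` for `i = 0`, the image of `C^{i,j}` for `i + 1`. -/
noncomputable def Bmod : ℕ → ℕ → Submodule ℤ (G.EState →₀ ℤ)
  | 0, _ => ⊥
  | i + 1, j => Submodule.map G.diff (G.Cmod i j)

/-- The graph cohomology group `H^{i,j}(G)` (cocycles modulo coboundaries in
bidegree `(i,j)`). -/
noncomputable def Hmod (i j : ℕ) : Type :=
  (G.Zmod i j).toAddSubgroup ⧸
    (AddSubgroup.comap (G.Zmod i j).toAddSubgroup.subtype (G.Bmod i j).toAddSubgroup)

noncomputable instance (i j : ℕ) : AddCommGroup (G.Hmod i j) := by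
  delta Hmod; infer_instance

end OGraph

namespace OGraph

variable (G : OGraph)

theorem estate_ext {S T : G.EState} (h1 : S.1 = T.1)
    (h2 : ∀ v : G.V, S.2 (Quot.mk _ v) ↔ T.2 (Quot.mk _ v)) : S = T := by
  obtain ⟨s, a⟩ := S
  obtain ⟨t, b⟩ := T
  obtain rfl : s = t := h1
  congr 1
  funext k
  induction k using Quot.ind with
  | mk v => exact propext (h2 v)

/-- Being in the same component. -/
def conn (s : Finset (Fin G.n)) (u v : G.V) : Prop :=
  Quot.mk (G.rel s) u = Quot.mk (G.rel s) v

theorem conn_of {s t : Finset (Fin G.n)} (h : ∀ u v, G.rel s u v → G.conn t u v)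
    {u v : G.V} (huv : G.conn s u v) : G.conn t u v :=
  congrArg (Quot.lift (Quot.mk (G.rel t)) h) huv

theorem conn_loop {e : Fin G.n} (he : (G.ends e).IsDiag) {s t : Finset (Fin G.n)}
    (h : ∀ f, f ≠ e → (f ∈ s ↔ f ∈ t)) (u v : G.V) : G.conn s u v ↔ G.conn t u v := by
  have key : ∀ s t : Finset (Fin G.n), (∀ f, f ≠ e → (f ∈ s ↔ f ∈ t)) →
      G.conn s u v → G.conn t u v := by
    intro s t h
    apply conn_of
    rintro u v ⟨f, hf, hfe⟩
    by_cases hfe' : f = e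
    · subst hfe'
      rw [hfe] at he
      have : u = v := by simpa using he
      subst this
      rfl
    · exact Quot.sound ⟨f, (h f hfe').1 hf, hfe⟩
  exact ⟨key s t h, key t s fun f hf => (h f hf).symm⟩

/-- Adding `f` merges two components colored `x`. -/
def Bad (S : G.EState) (f : Fin G.n) : Prop :=
  ∃ u v, ¬ G.conn S.1 u v ∧ G.conn (insert f S.1) u v ∧ S.2 (Quot.mk _ u) ∧ S.2 (Quot.mk _ v)

/-- The state obtained by adding `f`. -/
def push (S : G.EState) (f : Fin G.n) : G.EState :=
  ⟨insert f S.1, fun K => ∃ u, Quot.mk _ u = K ∧ S.2 (Quot.mk _ u)⟩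

open Classical in
theorem addEdge_eq (S : G.EState) (f : Fin G.n) :
    G.addEdge S f = if f ∈ S.1 ∨ G.Bad S f then 0 else Finsupp.single (G.push S f) 1 := by
  unfold addEdge
  by_cases hf : f ∈ S.1
  · simp [hf]
  · simp only [hf, if_false, false_or]
    have hb : ∀ p : G.Comp S.1 → G.Comp (insert f S.1), (∀ u, p (Quot.mk _ u) = Quot.mk _ u) →
        ((∃ k1 k2 : G.Comp S.1, k1 ≠ k2 ∧ p k1 = p k2 ∧ S.2 k1 ∧ S.2 k2) ↔ G.Bad S f) := by
      intro p hp
      constructor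
      · rintro ⟨k1, k2, h1, h2, h3, h4⟩
        induction k1 using Quot.ind with | mk u => ?_
        induction k2 using Quot.ind with | mk v => ?_
        rw [hp, hp] at h2
        exact ⟨u, v, h1, h2, h3, h4⟩
      · rintro ⟨u, v, h1, h2, h3, h4⟩
        exact ⟨Quot.mk _ u, Quot.mk _ v, h1, by rw [hp, hp]; exact h2, h3, h4⟩
    have hp : ∀ p : G.Comp S.1 → G.Comp (insert f S.1), (∀ u, p (Quot.mk _ u) = Quot.mk _ u) →
        (⟨insert f S.1, fun K => ∃ k, p k = K ∧ S.2 k⟩ : G.EState) = G.push S f := by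
      intro p hp
      refine G.estate_ext (T := G.push S f) rfl ?_
      intro v
      constructor
      · rintro ⟨k, h1, h2⟩
        induction k using Quot.ind with | mk u => ?_
        rw [hp] at h1
        exact ⟨u, h1, h2⟩
      · rintro ⟨u, h1, h2⟩
        exact ⟨Quot.mk _ u, by rw [hp]; exact h1, h2⟩
    refine if_congr (hb (qmap _) fun u => rfl) rfl ?_
    exact congrArg (fun T => Finsupp.single T (1 : ℤ)) (hp (qmap _) fun u => rfl)

/-- Remove the edge `e`. -/
def del (e : Fin G.n) (S : G.EState) : G.EState :=
  ⟨S.1.erase e, fun k => S.2 (qmap (fun _ _ huv =>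
    huv.elim fun f hf => ⟨f, Finset.mem_of_mem_erase hf.1, hf.2⟩) k)⟩

/-- The sign. -/
def sgn (s : Finset (Fin G.n)) (e : Fin G.n) : ℤ := (-1 : ℤ) ^ (s.filter fun f => f < e).card

theorem sgn_sq (s : Finset (Fin G.n)) (e : Fin G.n) : G.sgn s e * G.sgn s e = 1 := by
  unfold sgn
  rw [← mul_pow]; simp

theorem sgn_insert (s : Finset (Fin G.n)) (e f : Fin G.n) (hf : f ∉ s) :
    G.sgn (insert f s) e = (if f < e then -1 else 1) * G.sgn s e := by
  unfold sgn
  rw [Finset.filter_insert]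
  split_ifs with h
  · rw [Finset.card_insert_of_notMem (by simp [hf]), pow_succ]; ring
  · simp

open Classical in
/-- The homotopy on states. -/
noncomputable def hState (e : Fin G.n) (S : G.EState) : G.EState →₀ ℤ :=
  if e ∈ S.1 then G.sgn S.1 e • Finsupp.single (G.del e S) 1 else 0

/-- The homotopy. -/
noncomputable def hmap (e : Fin G.n) : (G.EState →₀ ℤ) →ₗ[ℤ] (G.EState →₀ ℤ) :=
  Finsupp.lsum ℤ fun S => LinearMap.toSpanSingleton ℤ _ (G.hState e S)

theorem hmap_single (e : Fin G.n) (S : G.EState) :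
    G.hmap e (Finsupp.single S 1) = G.hState e S := by
  simp [hmap]

theorem diff_single (S : G.EState) :
    G.diff (Finsupp.single S 1) = G.dState S := by
  simp [diff]

theorem color_congr (S : G.EState) {u v : G.V} (h : G.conn S.1 u v) :
    S.2 (Quot.mk _ u) ↔ S.2 (Quot.mk _ v) := iff_of_eq (congrArg S.2 h)

theorem not_bad_loop {e : Fin G.n} (he : (G.ends e).IsDiag) (S : G.EState) : ¬ G.Bad S e := by
  rintro ⟨u, v, h1, h2, -⟩
  exact h1 ((G.conn_loop he (by intro f hf; simp [hf]) u v).1 h2)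

theorem del_push {e : Fin G.n} (he : (G.ends e).IsDiag) (S : G.EState) (h : e ∉ S.1) :
    G.del e (G.push S e) = S := by
  apply estate_ext
  · simp [del, push, h]
  · intro v
    constructor
    · rintro ⟨u, h1, h2⟩
      exact (G.color_congr S ((G.conn_loop he (by intro f hf; simp [hf]) u v).1 h1)).1 h2
    · intro h2
      exact ⟨v, rfl, h2⟩

theorem push_del {e : Fin G.n} (he : (G.ends e).IsDiag) (S : G.EState) (h : e ∈ S.1) :
    G.push (G.del e S) e = S := by
  apply estate_ext
  · simp [del, push, h]
  · intro v
    constructor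
    · rintro ⟨u, h1, h2⟩
      exact (G.color_congr S ((G.conn_loop he (by intro f hf; simp [hf, del]) u v).1 h1)).1 h2
    · intro h2
      exact ⟨v, rfl, h2⟩

theorem push_comm {e : Fin G.n} (he : (G.ends e).IsDiag) (S : G.EState)
    (f : Fin G.n) (hf : f ≠ e) :
    G.del e (G.push S f) = G.push (G.del e S) f := by
  apply estate_ext
  · simp [del, push, Finset.erase_insert_of_ne hf]
  · intro v
    have hc := fun u => G.conn_loop he (s := insert f S.1) (t := insert f (S.1.erase e))
      (by intro g hg; simp [hg]) u v
    constructor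
    · rintro ⟨u, h1, h2⟩
      exact ⟨u, (hc u).1 h1, h2⟩
    · rintro ⟨u, h1, h2⟩
      exact ⟨u, (hc u).2 h1, h2⟩

theorem bad_del {e : Fin G.n} (he : (G.ends e).IsDiag) (S : G.EState) (f : Fin G.n) :
    G.Bad (G.del e S) f ↔ G.Bad S f := by
  have h1 := G.conn_loop he (s := (G.del e S).1) (t := S.1) (by intro g hg; simp [hg, del])
  have h2 := G.conn_loop he (s := insert f (G.del e S).1) (t := insert f S.1)
    (by intro g hg; simp [hg, del])
  unfold Bad
  simp only [h1, h2]
  rfl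

theorem hmap_addEdge {e : Fin G.n} (he : (G.ends e).IsDiag) (S : G.EState) (h : e ∈ S.1)
    (f : Fin G.n) (hf : f ≠ e) :
    G.sgn S.1 f • G.hmap e (G.addEdge S f) =
      -(G.sgn S.1 e • G.sgn (G.del e S).1 f • G.addEdge (G.del e S) f) := by
  classical
  have hm : f ∈ (G.del e S).1 ↔ f ∈ S.1 := by simp [del, hf]
  simp only [addEdge_eq, G.bad_del he, hm]
  split_ifs with hb
  · simp
  · push Not at hb
    rw [hmap_single, hState, if_pos (by simp [push, h]), G.push_comm he S f hf]
    have h1 : G.sgn S.1 f = (if e < f then -1 else 1) * G.sgn (G.del e S).1 f := by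
      rw [← G.sgn_insert _ f e (by simp [del])]
      simp [del, h]
    have h2 : G.sgn (G.push S f).1 e = (if f < e then -1 else 1) * G.sgn S.1 e :=
      G.sgn_insert _ e f hb.1
    rw [h1, h2, smul_smul, smul_smul, ← neg_smul]
    congr 1
    rcases lt_or_gt_of_ne hf with h | h
    · simp [h, h.not_gt]; ring
    · simp [h, h.not_gt]; ring

theorem homotopy_single {e : Fin G.n} (he : (G.ends e).IsDiag) (S : G.EState) :
    G.diff (G.hState e S) + G.hmap e (G.dState S) = Finsupp.single S 1 := by
  classical
  have hd : ∀ S, G.dState S = ∑ f, G.sgn S.1 f • G.addEdge S f := fun S => rfl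
  rw [hd, map_sum, ← Finset.add_sum_erase _ _ (Finset.mem_univ e)]
  simp only [map_smul]
  by_cases h : e ∈ S.1
  · rw [hState, if_pos h, map_smul, diff_single, hd,
      ← Finset.add_sum_erase _ _ (Finset.mem_univ e),
      Finset.sum_congr rfl fun f hf => G.hmap_addEdge he S h f (Finset.ne_of_mem_erase hf)]
    have h0 : G.addEdge S e = 0 := by rw [addEdge_eq]; simp [h]
    have h1 : G.addEdge (G.del e S) e = Finsupp.single S 1 := by
      rw [addEdge_eq, if_neg, G.push_del he S h]
      rintro (h | h)
      · simp [del] at h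
      · exact G.not_bad_loop he _ h
    have h2 : G.sgn (G.del e S).1 e = G.sgn S.1 e := by
      conv_rhs => rw [← Finset.insert_erase h, G.sgn_insert _ e e (by simp)]
      simp [del]
    rw [h0, h1, h2, smul_add, smul_smul, sgn_sq, Finset.smul_sum, Finset.sum_neg_distrib,
      map_zero, smul_zero, zero_add, one_smul, add_neg_cancel_right]
  · rw [Finset.sum_eq_zero]
    · rw [addEdge_eq, if_neg, hmap_single, hState, hState, if_neg h, if_pos (by simp [push]),
        G.del_push he S h]
      · have h2 : G.sgn (G.push S e).1 e = G.sgn S.1 e := by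
          simp [push, G.sgn_insert _ e e h]
        rw [h2, smul_smul, sgn_sq]; simp
      · rintro (h' | h')
        · exact h h'
        · exact G.not_bad_loop he _ h'
    · intro f hf
      rw [addEdge_eq]
      split_ifs
      · simp
      · rw [hmap_single, hState, if_neg, smul_zero]
        simp [push, h, (Finset.ne_of_mem_erase hf).symm]

theorem homotopy {e : Fin G.n} (he : (G.ends e).IsDiag) (z : G.EState →₀ ℤ) :
    G.diff (G.hmap e z) + G.hmap e (G.diff z) = z := by
  have : G.diff ∘ₗ G.hmap e + G.hmap e ∘ₗ G.diff = LinearMap.id := by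
    apply Finsupp.lhom_ext'
    intro S
    apply LinearMap.ext_ring
    simp only [LinearMap.comp_apply, LinearMap.add_apply, Finsupp.lsingle_apply, hmap_single,
      diff_single, LinearMap.id_apply]
    exact G.homotopy_single he S
  exact LinearMap.congr_fun this z

theorem jdeg_del {e : Fin G.n} (he : (G.ends e).IsDiag) (S : G.EState) :
    G.jdeg (G.del e S) = G.jdeg S := by
  have hc := G.conn_loop he (s := (G.del e S).1) (t := S.1) (by intro g hg; simp [hg, del])
  let q : G.Comp (G.del e S).1 → G.Comp S.1 := qmap (fun _ _ huv =>
    huv.elim fun f hf => ⟨f, Finset.mem_of_mem_erase hf.1, hf.2⟩)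
  apply Nat.card_congr
  refine Equiv.ofBijective (fun k => ⟨q k.1, k.2⟩) ⟨?_, ?_⟩
  · rintro ⟨k1, h1⟩ ⟨k2, h2⟩ h
    induction k1 using Quot.ind with | mk u => ?_
    induction k2 using Quot.ind with | mk v => ?_
    exact Subtype.ext ((hc u v).2 (congrArg Subtype.val h))
  · rintro ⟨k, h⟩
    induction k using Quot.ind with | mk u => ?_
    exact ⟨⟨Quot.mk _ u, h⟩, rfl⟩

theorem hmap_mem {e : Fin G.n} (N : Submodule ℤ (G.EState →₀ ℤ)) (i j : ℕ)
    (h : ∀ S : G.EState, S.1.card = i → G.jdeg S = j → G.hState e S ∈ N)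
    (z : G.EState →₀ ℤ) (hz : z ∈ G.Cmod i j) : G.hmap e z ∈ N := by
  unfold Cmod at hz
  rw [Finsupp.supported_eq_span_single] at hz
  have : Submodule.span ℤ ((fun S => Finsupp.single S (1:ℤ)) ''
      {S : G.EState | S.1.card = i ∧ G.jdeg S = j}) ≤ N.comap (G.hmap e) := by
    rw [Submodule.span_le]
    rintro _ ⟨S, ⟨h1, h2⟩, rfl⟩
    simp only [Submodule.comap_coe, Set.mem_preimage, hmap_single]
    exact h S h1 h2
  exact this hz

theorem Zmod_le_Bmod {e : Fin G.n} (he : (G.ends e).IsDiag) (i j : ℕ) :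
    G.Zmod i j ≤ G.Bmod i j := by
  rintro z ⟨hz, hc⟩
  have hz : G.diff z = 0 := hz
  have hh := G.homotopy he z
  rw [hz, map_zero, add_zero] at hh
  cases i with
  | zero =>
    have : G.hmap e z ∈ (⊥ : Submodule ℤ (G.EState →₀ ℤ)) := by
      refine G.hmap_mem _ 0 j (fun S h1 _ => ?_) z hc
      rw [Finset.card_eq_zero] at h1
      simp [hState, h1]
    rw [(Submodule.mem_bot ℤ).1 this, map_zero] at hh
    rw [← hh]
    exact Submodule.zero_mem _
  | succ i =>
    refine ⟨G.hmap e z, G.hmap_mem _ (i + 1) j (fun S h1 h2 => ?_) z hc, hh⟩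
    unfold hState
    split_ifs with h
    · apply Submodule.smul_mem
      apply Finsupp.single_mem_supported
      refine ⟨?_, ?_⟩
      · simp [del, Finset.card_erase_of_mem h, h1]
      · rw [G.jdeg_del he, h2]
    · exact Submodule.zero_mem _

end OGraph

/-- if `G` contains a loop (an edge whose two endpoints
coincide), then all graph cohomology groups of `G` vanish. -/
theorem cohomology_trivial_of_loop (G : OGraph) (e : Fin G.n)
    (he : (G.ends e).IsDiag) : ∀ i j : ℕ, Subsingleton (G.Hmod i j) := by
  intro i j
  have h := G.Zmod_le_Bmod he i j
  unfold OGraph.Hmod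
  refine QuotientAddGroup.subsingleton_iff.2 ?_
  rw [eq_top_iff]
  rintro ⟨z, hz⟩ -
  exact h hz
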